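/- For n ∈ ℕ let J(q,n) = Σ_{k=0}^n q^{nk}·(q^{−n−1}; q^{−1})_k·(q^{−n+1}; q)_k ∈ ℂ(q) be the colored Jones function of the figure-eight knot. Then there exist real numbers A and B such that for all n ∈ ℕ with J(q,n) ≠ 0, ord_q J(q,n) ≥ −n(n−1) − A·n − B. -/

import Mathlib

/-- The q-Pochhammer symbol `(a; p)_k = ∏_{j=0}^{k-1} (1 - a·pʲ)` in `ℂ(q)`. -/
noncomputable def qPoch (a p : RatFunc ℂ) (k : ℕ) : RatFunc ℂ :=
  ∏ j ∈ Finset.range k, (1 - a * p ^ j)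

/-- The colored Jones function of the figure-eight knot:
`J(q,n) = ∑_{k=0}^n q^{nk}·(q^{-n-1}; q^{-1})_k·(q^{-n+1}; q)_k ∈ ℂ(q)`. -/
noncomputable def coloredJones (n : ℕ) : RatFunc ℂ :=
  ∑ k ∈ Finset.range (n + 1),
    RatFunc.X ^ (n * k) *
      qPoch ((RatFunc.X : RatFunc ℂ) ^ (-(n : ℤ) - 1)) ((RatFunc.X : RatFunc ℂ) ^ (-1 : ℤ)) k *
      qPoch ((RatFunc.X : RatFunc ℂ) ^ (-(n : ℤ) + 1)) RatFunc.X k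

/-- Order of vanishing at `q = 0` of a rational function `f ∈ ℂ(q)`. -/
noncomputable def ordQ (f : RatFunc ℂ) : ℤ :=
  (Polynomial.rootMultiplicity 0 f.num : ℤ) - Polynomial.rootMultiplicity 0 f.denom

/-!
On nonzero functions `ordQ` is the `X`-adic valuation of `ℂ(q)`, which Mathlib writes
multiplicatively: `v f ≤ exp m` says that `f` has a pole of order at most `m` at `q = 0`. So it
suffices to bound `v` on each summand of `J(q,n)`. Every factor `1 - q^e` of the `k`-th summand has
`e ≤ 0`, hence a pole of order at most `-e`. The two Pochhammer symbols pair up: the exponents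
`-(n+1+j)` and `-(n-1-j)` add up to `-2n`, so together with `q^{nk}` the `k`-th summand has a pole
of order at most `nk`. The summand `k = n ≥ 1` vanishes, since `(q^{-n+1}; q)_n` contains the factor
`1 - q^0`; the remaining ones have `k ≤ n - 1`, which gives `ord_q J(q,n) ≥ -n(n-1)`.
-/

open Polynomial WithZero

section RationalFunctions

variable {K : Type*} [Field K]

lemma intValuation_idealX_eq_exp_neg_rootMultiplicity {p : K[X]} (hp : p ≠ 0) :
    (idealX K).intValuation p = exp (-(rootMultiplicity 0 p : ℤ)) := by
  obtain ⟨g, hpg, hg⟩ := exists_eq_pow_rootMultiplicity_mul_and_not_dvd p hp 0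
  rw [map_zero, sub_zero] at hpg hg
  have hvX : (idealX K).intValuation X = exp (-1 : ℤ) :=
    (idealX K).intValuation_singleton X_ne_zero (idealX_span K)
  have hvg : (idealX K).intValuation g = 1 := by
    rw [IsDedekindDomain.HeightOneSpectrum.intValuation_eq_one_iff, idealX_span,
      Ideal.mem_span_singleton]
    exact hg
  conv_lhs => rw [hpg, map_mul, map_pow, hvX, hvg, mul_one, ← exp_nsmul, nsmul_eq_mul, mul_neg_one]

lemma valuation_idealX_X_zpow (m : ℤ) :
    (idealX K).valuation (RatFunc K) (RatFunc.X ^ m) = exp (-m) := by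
  rw [map_zpow₀, valuation_X_eq_neg_one, ← exp_zsmul, smul_eq_mul, mul_neg_one]

lemma X_zpow_mul_X_pow (a : ℤ) (j : ℕ) :
    (RatFunc.X : RatFunc K) ^ a * RatFunc.X ^ j = RatFunc.X ^ (a + j) := by
  rw [zpow_add₀ RatFunc.X_ne_zero, zpow_natCast]

lemma X_zpow_mul_X_zpow_neg_one_pow (a : ℤ) (j : ℕ) :
    (RatFunc.X : RatFunc K) ^ a * (RatFunc.X ^ (-1 : ℤ)) ^ j = RatFunc.X ^ (a - j) := by
  rw [zpow_neg_one, inv_pow, ← div_eq_mul_inv, zpow_sub₀ RatFunc.X_ne_zero, zpow_natCast]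

lemma X_pow_mul_prod_X_zpow_mul_prod_X_zpow (n k : ℕ) :
    (RatFunc.X : RatFunc K) ^ (n * k) *
        (∏ j ∈ Finset.range k, RatFunc.X ^ (-(n : ℤ) - 1) * (RatFunc.X ^ (-1 : ℤ)) ^ j) *
        (∏ j ∈ Finset.range k, RatFunc.X ^ (-(n : ℤ) + 1) * RatFunc.X ^ j) =
      RatFunc.X ^ (-((n : ℤ) * k)) := by
  have hpair (j : ℕ) :
      (RatFunc.X : RatFunc K) ^ (-(n : ℤ) - 1 - j) * RatFunc.X ^ (-(n : ℤ) + 1 + j) =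
        RatFunc.X ^ (-2 * (n : ℤ)) := by
    rw [← zpow_add₀ RatFunc.X_ne_zero]
    ring_nf
  simp only [X_zpow_mul_X_zpow_neg_one_pow, X_zpow_mul_X_pow]
  rw [mul_assoc, ← Finset.prod_mul_distrib, Finset.prod_congr rfl fun j _ => hpair j,
    Finset.prod_const, Finset.card_range, ← zpow_natCast, ← zpow_natCast, ← zpow_mul,
    ← zpow_add₀ RatFunc.X_ne_zero]
  push_cast
  ring_nf

end RationalFunctions

lemma valuation_idealX_eq_exp_neg_ordQ {f : RatFunc ℂ} (hf : f ≠ 0) :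
    (idealX ℂ).valuation (RatFunc ℂ) f = exp (-ordQ f) := by
  conv_lhs => rw [← RatFunc.num_div_denom f]
  rw [map_div₀, IsDedekindDomain.HeightOneSpectrum.valuation_of_algebraMap,
    IsDedekindDomain.HeightOneSpectrum.valuation_of_algebraMap,
    intValuation_idealX_eq_exp_neg_rootMultiplicity (RatFunc.num_ne_zero hf),
    intValuation_idealX_eq_exp_neg_rootMultiplicity f.denom_ne_zero, ← exp_sub, ordQ]
  congr 1
  ring

lemma valuation_one_sub_le {R Γ₀ : Type*} [Ring R] [LinearOrderedCommMonoidWithZero Γ₀]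
    (v : Valuation R Γ₀) {x : R} (hx : 1 ≤ v x) : v (1 - x) ≤ v x :=
  v.map_sub_le (by rwa [map_one]) le_rfl

lemma valuation_qPoch_le {Γ₀ : Type*} [LinearOrderedCommMonoidWithZero Γ₀]
    (v : Valuation (RatFunc ℂ) Γ₀) {a p : RatFunc ℂ} {k : ℕ} (h : ∀ j < k, 1 ≤ v (a * p ^ j)) :
    v (qPoch a p k) ≤ v (∏ j ∈ Finset.range k, a * p ^ j) := by
  rw [qPoch, map_prod, map_prod]
  exact Finset.prod_le_prod' fun j hj => valuation_one_sub_le v (h j (Finset.mem_range.mp hj))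

lemma qPoch_eq_zero_of_mul_pow_eq_one {a p : RatFunc ℂ} {j k : ℕ} (hjk : j < k)
    (h : a * p ^ j = 1) :
    qPoch a p k = 0 :=
  Finset.prod_eq_zero (Finset.mem_range.mpr hjk) (by rw [h, sub_self])

/-- The `k`-th summand of the colored Jones function `J(q,n)`. -/
noncomputable def coloredJonesSummand (n k : ℕ) : RatFunc ℂ :=
  RatFunc.X ^ (n * k) *
    qPoch ((RatFunc.X : RatFunc ℂ) ^ (-(n : ℤ) - 1)) ((RatFunc.X : RatFunc ℂ) ^ (-1 : ℤ)) k *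
    qPoch ((RatFunc.X : RatFunc ℂ) ^ (-(n : ℤ) + 1)) RatFunc.X k

lemma coloredJones_eq_sum_coloredJonesSummand (n : ℕ) :
    coloredJones n = ∑ k ∈ Finset.range (n + 1), coloredJonesSummand n k :=
  rfl

lemma coloredJonesSummand_self {n : ℕ} (hn : n ≠ 0) : coloredJonesSummand n n = 0 := by
  have hfactor : (RatFunc.X : RatFunc ℂ) ^ (-(n : ℤ) + 1) * RatFunc.X ^ (n - 1) = 1 := by
    rw [X_zpow_mul_X_pow, Nat.cast_pred (Nat.pos_of_ne_zero hn),
      add_assoc, add_sub_cancel, neg_add_cancel, zpow_zero]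
  rw [coloredJonesSummand, qPoch_eq_zero_of_mul_pow_eq_one (Nat.sub_one_lt hn) hfactor, mul_zero]

lemma valuation_coloredJonesSummand_le {n k : ℕ} (hk : k ≤ n) :
    (idealX ℂ).valuation (RatFunc ℂ) (coloredJonesSummand n k) ≤ exp ((n : ℤ) * k) := by
  set v := (idealX ℂ).valuation (RatFunc ℂ)
  have hfirst := valuation_qPoch_le v (a := RatFunc.X ^ (-(n : ℤ) - 1))
    (p := RatFunc.X ^ (-1 : ℤ)) (k := k) fun j _ => by
      rw [X_zpow_mul_X_zpow_neg_one_pow, valuation_idealX_X_zpow, ← exp_zero, exp_le_exp]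
      lia
  have hsecond := valuation_qPoch_le v (a := RatFunc.X ^ (-(n : ℤ) + 1))
    (p := RatFunc.X) (k := k) fun j hj => by
      rw [X_zpow_mul_X_pow, valuation_idealX_X_zpow, ← exp_zero, exp_le_exp]
      lia
  calc v (coloredJonesSummand n k)
    _ ≤ v (RatFunc.X ^ (-((n : ℤ) * k))) := by
      rw [← X_pow_mul_prod_X_zpow_mul_prod_X_zpow, coloredJonesSummand]
      simp only [map_mul v]
      gcongr
    _ = exp ((n : ℤ) * k) := by rw [valuation_idealX_X_zpow, neg_neg]

lemma valuation_coloredJones_le (n : ℕ) :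
    (idealX ℂ).valuation (RatFunc ℂ) (coloredJones n) ≤ exp ((n : ℤ) * (n - 1)) := by
  rw [coloredJones_eq_sum_coloredJonesSummand]
  refine Valuation.map_sum_le _ fun k hk => ?_
  have hkn : k ≤ n := Finset.mem_range_succ_iff.mp hk
  obtain rfl | hn := eq_or_ne n 0
  · simpa using valuation_coloredJonesSummand_le hkn
  obtain rfl | hlt := hkn.eq_or_lt
  · rw [coloredJonesSummand_self hn, map_zero]
    exact zero_le
  · refine (valuation_coloredJonesSummand_le hkn).trans (exp_le_exp.mpr ?_)
    gcongr
    lia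

lemma neg_mul_sub_one_le_ordQ_coloredJones {n : ℕ} (h : coloredJones n ≠ 0) :
    -((n : ℤ) * (n - 1)) ≤ ordQ (coloredJones n) := by
  have hval := valuation_coloredJones_le n
  rw [valuation_idealX_eq_exp_neg_ordQ h, exp_le_exp] at hval
  exact neg_le.mp hval

/-- The order at `q = 0` of the colored Jones polynomial of the figure-eight knot decreases
at most like `-n(n-1)` minus a linear term. -/
theorem coloredJones_ordQ_growth :
    ∃ A B : ℝ, ∀ n : ℕ, coloredJones n ≠ 0 →
      -((n : ℝ) * ((n : ℝ) - 1)) - A * n - B ≤ (ordQ (coloredJones n) : ℝ) := by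
  refine ⟨0, 0, fun n hn => ?_⟩
  rw [zero_mul, sub_zero, sub_zero]
  exact_mod_cast neg_mul_sub_one_le_ordQ_coloredJones hn
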